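/- arXiv:1305.3318 — 2 statements merged into one kernel-verified Lean document; each statement's English description precedes it below -/
import Mathlib

section
/- Let ℓ ≥ 1, let Q = (Fin ℓ →₀ ℕ) be the free commutative monoid on ℓ generators, and let L be a Lie algebra over ℂ equipped with a family of ℂ-subspaces (𝒜_q)_{q∈Q} forming an internal direct sum decomposition L = ⊕_{q∈Q} 𝒜_q with [𝒜_p, 𝒜_q] ⊆ 𝒜_{p+q} for all p, q ∈ Q. Suppose e : Fin ℓ → L satisfies e_i ∈ 𝒜_{δ_i} for each i (δ_i ∈ Q the indicator function of i) and that the family (e_i) generates L as a Lie algebra. Then for every α ∈ Q, the component 𝒜_α is finite-dimensional of dimension at most ℓ^{ht(α)}, where ht(α) = ∑_{i} α(i) is the height of α. -/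
/-! A Lie algebra is spanned by the right-normed brackets `⁅e i₁, ⁅e i₂, … ⁅e iₙ₋₁, e iₙ⁆…⁆⁆` of its
generators: the elements whose bracket preserves this span form a subalgebra by the Jacobi identity,
and it contains every `e i`. Such a bracket is homogeneous of degree `δ i₁ + ⋯ + δ iₙ`, so by
independence of the components `𝒜 α` is spanned by the brackets of degree `α`. These are indexed by
words of length `ht(α)`. -/

lemma eq_span_image_of_iSupIndep {R M ι κ : Type*} [Ring R] [AddCommGroup M] [Module R M]
    {𝒜 : κ → Submodule R M} (h𝒜 : iSupIndep 𝒜)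
    {v : ι → M} {deg : ι → κ} (hv : ∀ i, v i ∈ 𝒜 (deg i)) {α : κ}
    (hα : 𝒜 α ≤ Submodule.span R (Set.range v)) :
    𝒜 α = Submodule.span R (v '' {i | deg i = α}) := by
  set S : Set ι := {i | deg i = α}
  have same_degree : Submodule.span R (v '' S) ≤ 𝒜 α :=
    Submodule.span_le.2 <| by rintro _ ⟨i, hi, rfl⟩; exact hi ▸ hv i
  have other_degrees : Submodule.span R (v '' Sᶜ) ≤ ⨆ β ≠ α, 𝒜 β :=
    Submodule.span_le.2 <| by
      rintro _ ⟨i, hi, rfl⟩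
      exact Submodule.mem_iSup_of_mem (deg i) (Submodule.mem_iSup_of_mem hi (hv i))
  have disjoint : Submodule.span R (v '' Sᶜ) ⊓ 𝒜 α = ⊥ :=
    ((h𝒜 α).mono_right other_degrees).symm.eq_bot
  calc 𝒜 α
      = Submodule.span R (Set.range v) ⊓ 𝒜 α := (inf_eq_right.2 hα).symm
    _ = (Submodule.span R (v '' S) ⊔ Submodule.span R (v '' Sᶜ)) ⊓ 𝒜 α := by
      rw [← Submodule.span_union, ← Set.image_union, Set.union_compl_self, Set.image_univ]
    _ = Submodule.span R (v '' S) := by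
      rw [sup_inf_assoc_of_le _ same_degree, disjoint, sup_bot_eq]

lemma finrank_span_image_le_ncard {R M ι : Type*} [Semiring R] [StrongRankCondition R]
    [AddCommMonoid M] [Module R M] (v : ι → M) {S : Set ι} (hS : S.Finite) :
    Module.finrank R (Submodule.span R (v '' S)) ≤ S.ncard := by
  have := (hS.image v).fintype
  calc Module.finrank R (Submodule.span R (v '' S))
      ≤ (v '' S).toFinset.card := finrank_span_le_card _
    _ = (v '' S).ncard := (Set.ncard_eq_toFinset_card' _).symm
    _ ≤ S.ncard := Set.ncard_image_le hS

lemma ncard_setOf_list_length_eq {ι : Type*} [Fintype ι] (n : ℕ) :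
    {w : List ι | w.length = n}.ncard = Fintype.card ι ^ n :=
  (Nat.card_eq_fintype_card (α := List.Vector ι n)).trans (card_vector n)

lemma degree_sum_map_single {ι : Type*} (w : List ι) :
    (w.map fun i => Finsupp.single i (1 : ℕ)).sum.degree = w.length := by
  simp [map_list_sum, Function.comp_def]

section RightNormedBracket

variable {R L M ι : Type*} [CommRing R] [LieRing L] [LieAlgebra R L]
  [AddCommGroup M] [Module R M] [LieRingModule L M] [LieModule R L M]

lemma lie_mem_of_mem_lieSpan {s : Set L} {W : Submodule R M} (hs : ∀ x ∈ s, ∀ m ∈ W, ⁅x, m⁆ ∈ W)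
    {x : L} (hx : x ∈ LieSubalgebra.lieSpan R L s) : ∀ m ∈ W, ⁅x, m⁆ ∈ W := by
  induction hx using LieSubalgebra.lieSpan_induction with
  | mem x hx => exact hs x hx
  | zero => simp
  | add x y _ _ hx hy =>
    intro m hm
    rw [add_lie]
    exact add_mem (hx m hm) (hy m hm)
  | smul t x _ hx =>
    intro m hm
    rw [smul_lie]
    exact W.smul_mem t (hx m hm)
  | lie x y _ _ hx hy =>
    intro m hm
    rw [lie_lie]
    exact sub_mem (hx _ (hy m hm)) (hy _ (hx m hm))

/-- The right-normed bracket `⁅e i₁, ⁅e i₂, … ⁅e iₙ₋₁, e iₙ⁆…⁆⁆` along the word `i₁ i₂ … iₙ`; these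
elements span the subalgebra generated by `e`. The empty word is sent to `0`, which lies in every
component of a grading. -/
def rightNormedBracket (e : ι → L) : List ι → L
  | [] => 0
  | [i] => e i
  | i :: j :: w => ⁅e i, rightNormedBracket e (j :: w)⁆

lemma rightNormedBracket_mem_lieSpan (e : ι → L) :
    ∀ w, rightNormedBracket e w ∈ LieSubalgebra.lieSpan R L (Set.range e)
  | [] => zero_mem _
  | [i] => LieSubalgebra.subset_lieSpan ⟨i, rfl⟩
  | i :: j :: w =>
    LieSubalgebra.lie_mem _ (LieSubalgebra.subset_lieSpan ⟨i, rfl⟩)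
      (rightNormedBracket_mem_lieSpan e (j :: w))

lemma lie_mem_span_rightNormedBracket (e : ι → L) (i : ι) :
    ∀ x ∈ Submodule.span R (Set.range (rightNormedBracket e)),
      ⁅e i, x⁆ ∈ Submodule.span R (Set.range (rightNormedBracket e)) := by
  suffices Submodule.span R (Set.range (rightNormedBracket e)) ≤
      (Submodule.span R (Set.range (rightNormedBracket e))).comap (LieAlgebra.ad R L (e i))
    from this
  rw [Submodule.span_le]
  rintro _ ⟨w, rfl⟩
  cases w with
  | nil => exact zero_mem _
  | cons j w => exact Submodule.subset_span ⟨i :: j :: w, rfl⟩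

lemma lieSpan_range_toSubmodule_eq_span (e : ι → L) :
    (LieSubalgebra.lieSpan R L (Set.range e)).toSubmodule =
      Submodule.span R (Set.range (rightNormedBracket e)) := by
  apply le_antisymm
  · intro x (hx : x ∈ LieSubalgebra.lieSpan R L (Set.range e))
    induction hx using LieSubalgebra.lieSpan_induction with
    | mem _ hx =>
      obtain ⟨i, rfl⟩ := hx
      exact Submodule.subset_span ⟨[i], rfl⟩
    | zero => exact zero_mem _
    | add _ _ _ _ hx hy => exact add_mem hx hy
    | smul t _ _ hx => exact Submodule.smul_mem _ t hx
    | lie x y hx _ _ hy =>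
      exact lie_mem_of_mem_lieSpan
        (Set.forall_mem_range.2 (lie_mem_span_rightNormedBracket e)) hx y hy
  · exact Submodule.span_le.2 (Set.range_subset_iff.2 (rightNormedBracket_mem_lieSpan e))

lemma rightNormedBracket_mem_graded {Q : Type*} [AddMonoid Q] {𝒜 : Q → Submodule R L}
    (hbracket : ∀ p q, ∀ x ∈ 𝒜 p, ∀ y ∈ 𝒜 q, ⁅x, y⁆ ∈ 𝒜 (p + q))
    {e : ι → L} {deg : ι → Q} (he : ∀ i, e i ∈ 𝒜 (deg i)) :
    ∀ w, rightNormedBracket e w ∈ 𝒜 (w.map deg).sum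
  | [] => zero_mem _
  | [i] => by simpa only [List.map_singleton, List.sum_singleton] using! he i
  | i :: j :: w => by
    rw [List.map_cons, List.sum_cons]
    exact hbracket _ _ _ (he i) _ (rightNormedBracket_mem_graded hbracket he (j :: w))

lemma graded_component_eq_span_rightNormedBracket {Q : Type*} [AddMonoid Q]
    {𝒜 : Q → Submodule R L} (h𝒜 : iSupIndep 𝒜)
    (hbracket : ∀ p q, ∀ x ∈ 𝒜 p, ∀ y ∈ 𝒜 q, ⁅x, y⁆ ∈ 𝒜 (p + q))
    {e : ι → L} {deg : ι → Q} (he : ∀ i, e i ∈ 𝒜 (deg i))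
    (hgen : LieSubalgebra.lieSpan R L (Set.range e) = ⊤) (α : Q) :
    𝒜 α = Submodule.span R (rightNormedBracket e '' {w | (w.map deg).sum = α}) := by
  refine eq_span_image_of_iSupIndep h𝒜 (rightNormedBracket_mem_graded hbracket he) ?_
  rw [← lieSpan_range_toSubmodule_eq_span, hgen]
  exact le_top

end RightNormedBracket

theorem graded_component_finrank_le_general {R L ι : Type*} [CommRing R] [Nontrivial R]
    [LieRing L] [LieAlgebra R L] [Fintype ι] {𝒜 : (ι →₀ ℕ) → Submodule R L}
    (h𝒜 : iSupIndep 𝒜)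
    (hbracket : ∀ p q, ∀ x ∈ 𝒜 p, ∀ y ∈ 𝒜 q, ⁅x, y⁆ ∈ 𝒜 (p + q))
    {e : ι → L} (he : ∀ i, e i ∈ 𝒜 (Finsupp.single i 1))
    (hgen : LieSubalgebra.lieSpan R L (Set.range e) = ⊤) (α : ι →₀ ℕ) :
    Module.Finite R (𝒜 α) ∧ Module.finrank R (𝒜 α) ≤ Fintype.card ι ^ α.degree := by
  set S : Set (List ι) := {w | (w.map fun i => Finsupp.single i 1).sum = α}
  have words_length : S ⊆ {w | w.length = α.degree} := fun w hw =>
    (degree_sum_map_single w).symm.trans (congrArg Finsupp.degree hw)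
  have words_finite : S.Finite := (List.finite_length_eq ι α.degree).subset words_length
  rw [graded_component_eq_span_rightNormedBracket h𝒜 hbracket he hgen α]
  refine ⟨Module.Finite.span_of_finite R (words_finite.image _), ?_⟩
  calc Module.finrank R (Submodule.span R (rightNormedBracket e '' S))
      ≤ S.ncard := finrank_span_image_le_ncard _ words_finite
    _ ≤ {w : List ι | w.length = α.degree}.ncard :=
      Set.ncard_le_ncard words_length (List.finite_length_eq ι α.degree)
    _ = Fintype.card ι ^ α.degree := ncard_setOf_list_length_eq α.degree

/-- Let `Q = (Fin ℓ →₀ ℕ)` and let `L` be a Lie algebra over `ℂ` with a `Q`-grading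
`(𝒜 q)_{q ∈ Q}` (an internal direct sum with `⁅𝒜 p, 𝒜 q⁆ ⊆ 𝒜 (p+q)`).  If `e : Fin ℓ → L`
satisfies `e i ∈ 𝒜 (δ i)` and generates `L` as a Lie algebra, then for every `α ∈ Q` the
component `𝒜 α` is finite dimensional of dimension at most `ℓ ^ ht(α)`, where
`ht(α) = ∑ i, α i`. -/
theorem graded_component_finrank_le
    (ℓ : ℕ) (hℓ : 1 ≤ ℓ) {L : Type*} [LieRing L] [LieAlgebra ℂ L]
    (𝒜 : (Fin ℓ →₀ ℕ) → Submodule ℂ L)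
    (hinternal : DirectSum.IsInternal 𝒜)
    (hbracket : ∀ p q : Fin ℓ →₀ ℕ, ∀ x ∈ 𝒜 p, ∀ y ∈ 𝒜 q, ⁅x, y⁆ ∈ 𝒜 (p + q))
    (e : Fin ℓ → L) (he : ∀ i : Fin ℓ, e i ∈ 𝒜 (Finsupp.single i 1))
    (hgen : LieSubalgebra.lieSpan ℂ L (Set.range e) = ⊤)
    (α : Fin ℓ →₀ ℕ) :
    FiniteDimensional ℂ (𝒜 α) ∧
      Module.finrank ℂ (𝒜 α) ≤ ℓ ^ (α.sum fun _ n => n) := by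
  have := graded_component_finrank_le_general hinternal.submodule_iSupIndep hbracket he hgen α
  rwa [Fintype.card_fin] at this
end

section
/- Let g = g(A) be the Serre-presented Lie algebra over ℂ of the generalized Cartan matrix A = [[2,−3],[−3,2]]. Then the root space of α = 4α₁ + 5α₂, namely the subspace {x ∈ g : [h₁,x] = −7·x and [h₂,x] = −2·x}, has dimension 9 over ℂ; that is, mult(4α₁+5α₂) = 9. (Here −7 = 2·4 − 3·5 and −2 = −3·4 + 2·5 are the values ∑_j A_{ij} c_j for c = (4,5).) -/
/-! Serre presentation of the Kac–Moody Lie algebra `g(A)` of a generalized Cartan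
matrix `A`. -/

/-- Generators `e i`, `f i`, `h i` of the Serre presentation. -/
inductive ChevalleyGen (ℓ : ℕ) : Type
  | e : Fin ℓ → ChevalleyGen ℓ
  | f : Fin ℓ → ChevalleyGen ℓ
  | h : Fin ℓ → ChevalleyGen ℓ

namespace KacMoody

variable {ℓ : ℕ}

/-- The free Lie algebra over `ℂ` on the generators. -/
abbrev FreeLie (ℓ : ℕ) : Type := FreeLieAlgebra ℂ (ChevalleyGen ℓ)

noncomputable def E (i : Fin ℓ) : FreeLie ℓ := FreeLieAlgebra.of ℂ (ChevalleyGen.e i)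
noncomputable def F (i : Fin ℓ) : FreeLie ℓ := FreeLieAlgebra.of ℂ (ChevalleyGen.f i)
noncomputable def H (i : Fin ℓ) : FreeLie ℓ := FreeLieAlgebra.of ℂ (ChevalleyGen.h i)

open LieAlgebra in
/-- The defining relations of the Serre presentation: `⁅h i, h j⁆ = 0`,
`⁅e i, f j⁆ = δ_{ij} h i`, `⁅h i, e j⁆ = A i j • e j`, `⁅h i, f j⁆ = −A i j • f j`, and the
Serre relations `(ad (e i))^(1 − A i j) (e j) = 0`, `(ad (f i))^(1 − A i j) (f j) = 0` for
`i ≠ j`. -/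
noncomputable def serreRelations (A : Matrix (Fin ℓ) (Fin ℓ) ℤ) : Set (FreeLie ℓ) :=
  {x : FreeLie ℓ | ∃ i j : Fin ℓ, x = ⁅H i, H j⁆} ∪
  {x : FreeLie ℓ | ∃ i j : Fin ℓ, x = ⁅E i, F j⁆ - if i = j then H i else 0} ∪
  {x : FreeLie ℓ | ∃ i j : Fin ℓ, x = ⁅H i, E j⁆ - (A i j : ℂ) • E j} ∪
  {x : FreeLie ℓ | ∃ i j : Fin ℓ, x = ⁅H i, F j⁆ + (A i j : ℂ) • F j} ∪
  {x : FreeLie ℓ | ∃ i j : Fin ℓ, i ≠ j ∧ x = ((ad ℂ (FreeLie ℓ) (E i)) ^ (1 - A i j).toNat) (E j)} ∪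
  {x : FreeLie ℓ | ∃ i j : Fin ℓ, i ≠ j ∧ x = ((ad ℂ (FreeLie ℓ) (F i)) ^ (1 - A i j).toNat) (F j)}

/-- The Lie ideal of the free Lie algebra generated by the Serre relations. -/
noncomputable def serreIdeal (A : Matrix (Fin ℓ) (Fin ℓ) ℤ) : LieIdeal ℂ (FreeLie ℓ) :=
  LieSubmodule.lieSpan ℂ (FreeLie ℓ) (serreRelations A)

/-- The Serre-presented Lie algebra `g(A)` of a generalized Cartan matrix `A`: the quotient
of the free Lie algebra on the generators `e i`, `f i`, `h i` by the ideal generated by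
the defining relations. -/
abbrev gA (A : Matrix (Fin ℓ) (Fin ℓ) ℤ) : Type := FreeLie ℓ ⧸ serreIdeal A

/-- The image of `h i` in `g(A)`. -/
noncomputable def Hbar (A : Matrix (Fin ℓ) (Fin ℓ) ℤ) (i : Fin ℓ) : gA A :=
  LieSubmodule.Quotient.mk' (serreIdeal A) (H i)

open LieAlgebra in
/-- The root space `g_α` for `α = ∑ c i • α i`: all `x` with
`⁅h i, x⁆ = (∑ j, A i j * c j) • x` for every `i`. -/
noncomputable def rootSpace (A : Matrix (Fin ℓ) (Fin ℓ) ℤ) (c : Fin ℓ → ℤ) :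
    Submodule ℂ (gA A) :=
  ⨅ i : Fin ℓ, Module.End.eigenspace (ad ℂ (gA A) (Hbar A i)) ((∑ j, A i j * c j : ℤ) : ℂ)

/-- The multiplicity of the root `α = ∑ c i • α i`: the dimension of `g_α`. -/
noncomputable def mult (A : Matrix (Fin ℓ) (Fin ℓ) ℤ) (c : Fin ℓ → ℤ) : ℕ :=
  Module.finrank ℂ (rootSpace A c)

end KacMoody

/-!
By the triangular decomposition, which needs only the Chevalley relations, the root space of
`4α₁ + 5α₂` is spanned by the right-normed brackets of the words with four letters `e₁` and five
letters `e₂`: root spaces of distinct weights are independent because `A` is invertible.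

For the upper bound, skew symmetry and the Jacobi identity together with the Serre relations express
the brackets of a few short words through those of other words, and exactly nine words of the
required content have none of these short words as a suffix.

For the lower bound, `g(A)` acts on the functions on words orthogonal to the Serre elements, with
`eᵢ` acting by `φ ↦ φ (i :: ·)`. The `fᵢ` preserve orthogonality because they commute with the
Serre elements. A function supported on one word without a factor that is an anagram of a
Serre word is orthogonal to them, so coefficients in the free associative algebra at such words
descend to functionals on `g(A)`; nine brackets and nine words give a triangular matrix.
-/

namespace KacMoody

variable {ℓ : ℕ}

section RightNormed

variable {ι L L' : Type*} [LieRing L] [LieRing L']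

/-- The right-normed bracket `⁅e i₁, ⁅e i₂, …, e iₙ⁆⁆` of a word `i₁ i₂ … iₙ`; the empty word is
sent to `0`. -/
def rightNormed (e : ι → L) : List ι → L
  | [] => 0
  | [i] => e i
  | i :: j :: w => ⁅e i, rightNormed e (j :: w)⁆

theorem rightNormed_cons (e : ι → L) (i : ι) {w : List ι} (hw : w ≠ []) :
    rightNormed e (i :: w) = ⁅e i, rightNormed e w⁆ := by
  cases w with
  | nil => exact absurd rfl hw
  | cons j w => rfl

theorem word_induction {motive : List ι → Prop} (nil : motive []) (singleton : ∀ i, motive [i])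
    (cons : ∀ i w, w ≠ [] → motive w → motive (i :: w)) (w : List ι) : motive w := by
  induction w with
  | nil => exact nil
  | cons i w ih =>
    by_cases hw : w = []
    · exact hw ▸ singleton i
    · exact cons i w hw ih

theorem map_rightNormed {F : Type*} [FunLike F L L'] [ZeroHomClass F L L'] (φ : F)
    (hφ : ∀ x y, φ ⁅x, y⁆ = ⁅φ x, φ y⁆) (e : ι → L) (w : List ι) :
    φ (rightNormed e w) = rightNormed (fun i => φ (e i)) w := by
  induction w using word_induction with
  | nil => exact map_zero φ
  | singleton i => rfl
  | cons i w hw ih => rw [rightNormed_cons _ _ hw, rightNormed_cons _ _ hw, hφ, ih]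

theorem rightNormed_replicate (e : ι → L) (i : ι) (n : ℕ) :
    rightNormed e (List.replicate (n + 2) i) = 0 := by
  induction n with
  | zero => exact lie_self (e i)
  | succ n ih => rw [List.replicate_succ, rightNormed_cons _ _ (by simp), ih, lie_zero]

theorem ad_pow_eq_rightNormed {R : Type*} [CommRing R] [LieAlgebra R L] (e : ι → L) (i j : ι)
    (n : ℕ) :
    (LieAlgebra.ad R L (e i) ^ n) (e j) = rightNormed e (List.replicate n i ++ [j]) := by
  induction n with
  | zero => rfl
  | succ n ih =>
    rw [pow_succ', Module.End.mul_apply, ih, List.replicate_succ, List.cons_append,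
      rightNormed_cons _ _ (by simp), LieAlgebra.ad_apply]

theorem lie_rightNormed {e : ι → L} {z : L} {d : ι → ℤ} (hz : ∀ i, ⁅z, e i⁆ = d i • e i)
    (w : List ι) : ⁅z, rightNormed e w⁆ = (w.map d).sum • rightNormed e w := by
  induction w using word_induction with
  | nil => simp [rightNormed]
  | singleton i => simpa [rightNormed] using hz i
  | cons i w hw ih =>
    rw [rightNormed_cons _ _ hw, leibniz_lie, hz, ih, smul_lie, lie_smul, List.map_cons,
      List.sum_cons, add_smul]

end RightNormed

section ChevalleyRelations

variable {ι L : Type*} [DecidableEq ι] [LieRing L] {A : Matrix ι ι ℤ}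
  {e f h : ι → L}

/-- The relations of the Serre presentation other than the Serre relations. -/
structure ChevalleyRelations (A : Matrix ι ι ℤ) (e f h : ι → L) : Prop where
  lie_h_h : ∀ i j, ⁅h i, h j⁆ = 0
  lie_e_f : ∀ i j, ⁅e i, f j⁆ = if i = j then h i else 0
  lie_h_e : ∀ i j, ⁅h i, e j⁆ = A i j • e j
  lie_h_f : ∀ i j, ⁅h i, f j⁆ = -A i j • f j

/-- Generalized Cartan matrices. -/
structure IsGeneralizedCartan (A : Matrix ι ι ℤ) : Prop where
  diag : ∀ i, A i i = 2
  nonpos : ∀ i j, i ≠ j → A i j ≤ 0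
  zero_symm : ∀ i j, A i j = 0 → A j i = 0

/-- The word whose right-normed bracket is the Serre element `(ad eᵢ)^(1 - Aᵢⱼ) eⱼ`. -/
def serreWord (A : Matrix ι ι ℤ) (i j : ι) : List ι :=
  List.replicate (1 - A i j).toNat i ++ [j]

namespace ChevalleyRelations

protected theorem symm (rel : ChevalleyRelations A e f h) :
    ChevalleyRelations A f e (-h) where
  lie_h_h i j := by simp [rel.lie_h_h]
  lie_e_f i j := by
    rw [← lie_skew, rel.lie_e_f, Pi.neg_apply]
    rcases eq_or_ne i j with rfl | hij
    · simp
    · simp [hij, hij.symm]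
  lie_h_e i j := by simp [rel.lie_h_f]
  lie_h_f i j := by simp [rel.lie_h_e]

theorem lie_f_e (rel : ChevalleyRelations A e f h) (i j : ι) :
    ⁅f i, e j⁆ = if i = j then -h i else 0 :=
  rel.symm.lie_e_f i j

theorem lie_f_lie_e (rel : ChevalleyRelations A e f h) (i j : ι) (x : L) :
    ⁅f i, ⁅e j, x⁆⁆ = (if i = j then -⁅h i, x⁆ else 0) + ⁅e j, ⁅f i, x⁆⁆ := by
  rw [leibniz_lie, rel.lie_f_e]
  split_ifs <;> simp

theorem lie_h_rightNormed (rel : ChevalleyRelations A e f h) (i : ι) (w : List ι) :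
    ⁅h i, rightNormed e w⁆ = (w.map (A i)).sum • rightNormed e w :=
  lie_rightNormed (rel.lie_h_e i) w

theorem lie_f_rightNormed_replicate (rel : ChevalleyRelations A e f h) {i j : ι} (hij : i ≠ j)
    (hA : A i i = 2) (n : ℕ) :
    ⁅f i, rightNormed e (List.replicate (n + 1) i ++ [j])⁆ =
      (-(n + 1) * (A i j + n)) • rightNormed e (List.replicate n i ++ [j]) := by
  induction n with
  | zero =>
    change ⁅f i, ⁅e i, e j⁆⁆ = _ • e j
    simp [rel.lie_f_lie_e, rel.lie_f_e, hij, rel.lie_h_e]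
  | succ n ih =>
    rw [List.replicate_succ, List.cons_append, rightNormed_cons _ _ (by simp), rel.lie_f_lie_e,
      if_pos rfl, ih, lie_smul, ← rightNormed_cons _ _ (by simp), ← List.cons_append,
      ← List.replicate_succ, rel.lie_h_rightNormed, ← neg_smul, ← add_smul]
    congr 1
    simp only [List.map_append, List.map_replicate, List.sum_append, List.sum_replicate, hA,
      List.map_singleton, List.sum_singleton]
    push_cast
    simp only [nsmul_eq_mul]
    push_cast
    ring

theorem lie_f_rightNormed_replicate_of_ne (rel : ChevalleyRelations A e f h) {i j k : ι}
    (hki : k ≠ i) (n : ℕ) :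
    ⁅f k, rightNormed e (List.replicate (n + 1) i ++ [j])⁆ =
      if k = j then A j i • rightNormed e (List.replicate (n + 1) i) else 0 := by
  induction n with
  | zero =>
    change ⁅f k, ⁅e i, e j⁆⁆ = if k = j then A j i • e i else 0
    rw [rel.lie_f_lie_e, if_neg hki, zero_add, rel.lie_f_e]
    split_ifs with hkj
    · rw [lie_neg, lie_skew, hkj, rel.lie_h_e]
    · exact lie_zero _
  | succ n ih =>
    rw [List.replicate_succ, List.cons_append, rightNormed_cons _ _ (by simp), rel.lie_f_lie_e,
      if_neg hki, zero_add, ih, rightNormed_cons _ _ (by simp)]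
    split_ifs
    · exact lie_smul _ _ _
    · exact lie_zero _

theorem lie_f_serre (rel : ChevalleyRelations A e f h) (hA : IsGeneralizedCartan A)
    {i j : ι} (hij : i ≠ j) (k : ι) : ⁅f k, rightNormed e (serreWord A i j)⁆ = 0 := by
  obtain ⟨n, hn⟩ : ∃ n : ℕ, A i j = -n := ⟨(-A i j).toNat, by have := hA.nonpos i j hij; omega⟩
  have hword : serreWord A i j = List.replicate (n + 1) i ++ [j] := by
    rw [serreWord, hn, show (1 - -(n : ℤ)).toNat = n + 1 by omega]
  rw [hword]
  rcases eq_or_ne k i with rfl | hki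
  · rw [rel.lie_f_rightNormed_replicate hij (hA.diag k), hn]
    simp
  · rw [rel.lie_f_rightNormed_replicate_of_ne hki]
    cases n with
    | zero => simp [hA.zero_symm i j (by simpa using hn)]
    | succ n => simp [rightNormed_replicate]

end ChevalleyRelations

end ChevalleyRelations

section Presentation

variable {L : Type*} [LieRing L]

/-- All the relations of the Serre presentation. -/
structure SerreRelations {ι : Type*} [DecidableEq ι] (A : Matrix ι ι ℤ) (e f h : ι → L) : Prop
    extends ChevalleyRelations A e f h where
  serre_e : ∀ i j, i ≠ j → rightNormed e (serreWord A i j) = 0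
  serre_f : ∀ i j, i ≠ j → rightNormed f (serreWord A i j) = 0

variable [LieAlgebra ℂ L] {A : Matrix (Fin ℓ) (Fin ℓ) ℤ}

theorem forall_mem_serreRelations_eq_zero_iff (φ : FreeLie ℓ →ₗ⁅ℂ⁆ L) :
    (∀ x ∈ serreRelations A, φ x = 0) ↔
      SerreRelations A (fun i => φ (E i)) (fun i => φ (F i)) (fun i => φ (H i)) := by
  have serre_iff (X : Fin ℓ → FreeLie ℓ) (i j : Fin ℓ) :
      φ ((LieAlgebra.ad ℂ (FreeLie ℓ) (X i) ^ (1 - A i j).toNat) (X j)) =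
        rightNormed (fun i => φ (X i)) (serreWord A i j) := by
    rw [ad_pow_eq_rightNormed, map_rightNormed φ φ.map_lie, serreWord]
  have delta (i j : Fin ℓ) : φ (if i = j then H i else 0) = if i = j then φ (H i) else 0 := by
    split_ifs <;> simp
  constructor
  · intro hφ
    exact
    { lie_h_h i j := by
        simpa using hφ _ (.inl <| .inl <| .inl <| .inl <| .inl ⟨i, j, rfl⟩)
      lie_e_f i j := by
        simpa [sub_eq_zero, delta] using hφ _ (.inl <| .inl <| .inl <| .inl <| .inr ⟨i, j, rfl⟩)
      lie_h_e i j := by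
        simpa [sub_eq_zero, Int.cast_smul_eq_zsmul] using
          hφ _ (.inl <| .inl <| .inl <| .inr ⟨i, j, rfl⟩)
      lie_h_f i j := by
        simpa [add_eq_zero_iff_eq_neg, Int.cast_smul_eq_zsmul] using
          hφ _ (.inl <| .inl <| .inr ⟨i, j, rfl⟩)
      serre_e i j hij := (serre_iff E i j).symm.trans (hφ _ (.inl <| .inr ⟨i, j, hij, rfl⟩))
      serre_f i j hij := (serre_iff F i j).symm.trans (hφ _ (.inr ⟨i, j, hij, rfl⟩)) }
  · rintro rel x (((((⟨i, j, rfl⟩ | ⟨i, j, rfl⟩) | ⟨i, j, rfl⟩) | ⟨i, j, rfl⟩) |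
      ⟨i, j, hij, rfl⟩) | ⟨i, j, hij, rfl⟩)
    · simpa using rel.lie_h_h i j
    · simpa [sub_eq_zero, delta] using rel.lie_e_f i j
    · simpa [sub_eq_zero, Int.cast_smul_eq_zsmul] using rel.lie_h_e i j
    · simpa [add_eq_zero_iff_eq_neg, Int.cast_smul_eq_zsmul] using rel.lie_h_f i j
    · exact (serre_iff E i j).trans (rel.serre_e i j hij)
    · exact (serre_iff F i j).trans (rel.serre_f i j hij)

variable (A) in
/-- The projection `FreeLie ℓ → g(A)` as a homomorphism of Lie algebras. -/
noncomputable def proj : FreeLie ℓ →ₗ⁅ℂ⁆ gA A where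
  toLinearMap := (serreIdeal A).toSubmodule.mkQ
  map_lie' := rfl

variable (A) in
/-- The image of `e i` in `g(A)`. -/
noncomputable def Ebar (i : Fin ℓ) : gA A := proj A (E i)

variable (A) in
/-- The image of `f i` in `g(A)`. -/
noncomputable def Fbar (i : Fin ℓ) : gA A := proj A (F i)

theorem proj_surjective : Function.Surjective (proj A) :=
  (serreIdeal A).toSubmodule.mkQ_surjective

theorem serreRelations_bar : SerreRelations A (Ebar A) (Fbar A) (Hbar A) :=
  (forall_mem_serreRelations_eq_zero_iff (proj A)).mp fun _ hx =>
    (Submodule.Quotient.mk_eq_zero _).mpr (LieSubmodule.subset_lieSpan hx)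

theorem exists_lieHom_of_serreRelations {e f h : Fin ℓ → L} (rel : SerreRelations A e f h) :
    ∃ φ : gA A →ₗ⁅ℂ⁆ L, ∀ i, φ (Ebar A i) = e i := by
  obtain ⟨ψ, hψ⟩ : ∃ ψ : FreeLie ℓ →ₗ⁅ℂ⁆ L,
      ∀ x, ψ (FreeLieAlgebra.of ℂ x) = ChevalleyGen.rec e f h x :=
    ⟨FreeLieAlgebra.lift ℂ _, FreeLieAlgebra.lift_of_apply _⟩
  have hker : serreIdeal A ≤ ψ.ker := LieSubmodule.lieSpan_le.mpr <|
    (forall_mem_serreRelations_eq_zero_iff ψ).mpr <| by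
      simpa only [E, F, H, hψ] using rel
  let φ : gA A →ₗ⁅ℂ⁆ L :=
    { toLinearMap := (serreIdeal A).toSubmodule.liftQ ψ hker
      map_lie' := fun {x y} => by
        obtain ⟨x, rfl⟩ := proj_surjective x
        obtain ⟨y, rfl⟩ := proj_surjective y
        exact ψ.map_lie x y }
  exact ⟨φ, fun i => hψ (.e i)⟩

theorem lieSpan_range_of {R X : Type*} [CommRing R] :
    LieSubalgebra.lieSpan R (FreeLieAlgebra R X) (Set.range (FreeLieAlgebra.of R)) = ⊤ := by
  set K := LieSubalgebra.lieSpan R (FreeLieAlgebra R X) (Set.range (FreeLieAlgebra.of R))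
  let φ : FreeLieAlgebra R X →ₗ⁅R⁆ K := FreeLieAlgebra.lift R fun x =>
    ⟨FreeLieAlgebra.of R x, LieSubalgebra.subset_lieSpan ⟨x, rfl⟩⟩
  have hφ : K.incl.comp φ = LieHom.id := by
    ext x
    simp [φ]
  refine eq_top_iff.mpr fun x _ => ?_
  have hx : (φ x : FreeLieAlgebra R X) = x := LieHom.congr_fun hφ x
  exact hx ▸ (φ x).2

theorem lieSpan_bar_eq_top :
    LieSubalgebra.lieSpan ℂ (gA A)
      (Set.range (Ebar A) ∪ Set.range (Hbar A) ∪ Set.range (Fbar A)) = ⊤ := by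
  set K := LieSubalgebra.lieSpan ℂ (gA A)
    (Set.range (Ebar A) ∪ Set.range (Hbar A) ∪ Set.range (Fbar A))
  have hle : LieSubalgebra.lieSpan ℂ (FreeLie ℓ) (Set.range (FreeLieAlgebra.of ℂ)) ≤
      K.comap (proj A) := by
    refine LieSubalgebra.lieSpan_le.mpr ?_
    rintro _ ⟨i | i | i, rfl⟩
    · exact LieSubalgebra.subset_lieSpan (.inl <| .inl ⟨i, rfl⟩)
    · exact LieSubalgebra.subset_lieSpan (.inr ⟨i, rfl⟩)
    · exact LieSubalgebra.subset_lieSpan (.inl <| .inr ⟨i, rfl⟩)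
  refine eq_top_iff.mpr fun x _ => ?_
  obtain ⟨x, rfl⟩ := proj_surjective x
  exact hle (lieSpan_range_of.ge trivial)

end Presentation

section TriangularDecomposition

variable {R ι L : Type*} [CommRing R] [LieRing L] [LieAlgebra R L]

theorem lie_mem_of_mem_span {S : Set L} {T : Submodule R L} {x z : L}
    (hS : ∀ s ∈ S, ⁅x, s⁆ ∈ T) (hz : z ∈ Submodule.span R S) : ⁅x, z⁆ ∈ T :=
  (Submodule.span_le (p := T.comap (LieAlgebra.ad R L x))).mpr hS hz

theorem eq_top_of_forall_lie_mem {S : Set L} (hS : LieSubalgebra.lieSpan R L S = ⊤)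
    {T : Submodule R L} (hST : S ⊆ T) (hT : ∀ s ∈ S, ∀ t ∈ T, ⁅s, t⁆ ∈ T) : T = ⊤ := by
  let stabilizer : LieSubalgebra R L :=
    { carrier := {x | ∀ t ∈ T, ⁅x, t⁆ ∈ T}
      zero_mem' := fun t _ => by simp
      add_mem' := fun hx hy t ht => by
        rw [add_lie]
        exact T.add_mem (hx t ht) (hy t ht)
      smul_mem' := fun c x hx t ht => by
        rw [smul_lie]
        exact T.smul_mem c (hx t ht)
      lie_mem' := fun hx hy t ht => by
        rw [lie_lie]
        exact T.sub_mem (hx _ (hy t ht)) (hy _ (hx t ht)) }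
  have hstab : stabilizer = ⊤ := top_le_iff.mp (hS ▸ LieSubalgebra.lieSpan_le.mpr hT)
  let T' : LieSubalgebra R L :=
    { T with
      lie_mem' := fun {x y} _ hy => (hstab.ge (LieSubalgebra.mem_top x) : x ∈ stabilizer) y hy }
  have hT' : T' = ⊤ := top_le_iff.mp (hS ▸ LieSubalgebra.lieSpan_le.mpr hST)
  exact congrArg LieSubalgebra.toSubmodule hT'

variable (R) in
/-- The span of the right-normed brackets of the `e i`, of the `h i`, and of the right-normed
brackets of the `f i`: the sum `n₊ + h + n₋` of a triangular decomposition. -/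
def triangularSpan (e f h : ι → L) : Submodule R L :=
  Submodule.span R (Set.range (rightNormed e) ∪ Set.range h ∪ Set.range (rightNormed f))

theorem triangularSpan_swap (e f h : ι → L) :
    triangularSpan R f e (-h) = triangularSpan R e f h := by
  have hneg : Set.range (-h) = -Set.range h := by
    ext x
    simp [neg_eq_iff_eq_neg]
  simp only [triangularSpan, Submodule.span_union, hneg, Submodule.span_neg]
  rw [sup_comm, sup_comm (Submodule.span R (Set.range (rightNormed f))), sup_assoc]

variable [DecidableEq ι] {A : Matrix ι ι ℤ} {e f h : ι → L}

namespace ChevalleyRelations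

theorem lie_f_rightNormed_mem (rel : ChevalleyRelations A e f h) (k : ι) (w : List ι) :
    ⁅f k, rightNormed e w⁆ ∈ Submodule.span R (Set.range (rightNormed e) ∪ Set.range h) := by
  set B := Submodule.span R (Set.range (rightNormed e) ∪ Set.range h)
  have mem_e (w : List ι) : rightNormed e w ∈ B := Submodule.subset_span (.inl ⟨w, rfl⟩)
  have mem_h (i : ι) : h i ∈ B := Submodule.subset_span (.inr ⟨i, rfl⟩)
  have lie_e_mem (i : ι) {z : L} (hz : z ∈ B) : ⁅e i, z⁆ ∈ B := by
    refine lie_mem_of_mem_span ?_ hz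
    rintro _ (⟨w, rfl⟩ | ⟨j, rfl⟩)
    · rcases eq_or_ne w [] with rfl | hw
      · simp [rightNormed]
      · exact rightNormed_cons e i hw ▸ mem_e (i :: w)
    · rw [← lie_skew, rel.lie_h_e]
      exact neg_mem (zsmul_mem (mem_e [i]) _)
  induction w using word_induction with
  | nil => simp [rightNormed]
  | singleton i =>
    rw [rightNormed, rel.lie_f_e]
    split_ifs
    · exact neg_mem (mem_h k)
    · exact zero_mem _
  | cons i w hw ih =>
    rw [rightNormed_cons _ _ hw, rel.lie_f_lie_e, rel.lie_h_rightNormed]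
    refine add_mem ?_ (lie_e_mem i ih)
    split_ifs
    · exact neg_mem (zsmul_mem (mem_e w) _)
    · exact zero_mem _

theorem lie_e_triangular_mem (rel : ChevalleyRelations A e f h) (k : ι) {z : L}
    (hz : z ∈ triangularSpan R e f h) : ⁅e k, z⁆ ∈ triangularSpan R e f h := by
  refine lie_mem_of_mem_span ?_ hz
  rintro _ ((⟨w, rfl⟩ | ⟨i, rfl⟩) | ⟨w, rfl⟩)
  · rcases eq_or_ne w [] with rfl | hw
    · simp [rightNormed]
    · exact Submodule.subset_span (.inl <| .inl ⟨k :: w, rightNormed_cons e k hw⟩)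
  · rw [← lie_skew, rel.lie_h_e]
    exact neg_mem (zsmul_mem (Submodule.subset_span (.inl <| .inl ⟨[k], rfl⟩)) _)
  · refine Submodule.span_le.mpr ?_ (rel.symm.lie_f_rightNormed_mem k w)
    rintro _ (⟨w, rfl⟩ | ⟨i, rfl⟩)
    · exact Submodule.subset_span (.inr ⟨w, rfl⟩)
    · exact neg_mem (Submodule.subset_span (.inl <| .inr ⟨i, rfl⟩))

theorem lie_h_triangular_mem (rel : ChevalleyRelations A e f h) (k : ι) {z : L}
    (hz : z ∈ triangularSpan R e f h) : ⁅h k, z⁆ ∈ triangularSpan R e f h := by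
  refine lie_mem_of_mem_span ?_ hz
  rintro _ ((⟨w, rfl⟩ | ⟨i, rfl⟩) | ⟨w, rfl⟩)
  · rw [rel.lie_h_rightNormed]
    exact zsmul_mem (Submodule.subset_span (.inl <| .inl ⟨w, rfl⟩)) _
  · rw [rel.lie_h_h]
    exact zero_mem _
  · rw [lie_rightNormed (rel.lie_h_f k)]
    exact zsmul_mem (Submodule.subset_span (.inr ⟨w, rfl⟩)) _

theorem triangularSpan_eq_top (rel : ChevalleyRelations A e f h)
    (hgen : LieSubalgebra.lieSpan R L (Set.range e ∪ Set.range h ∪ Set.range f) = ⊤) :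
    triangularSpan R e f h = ⊤ := by
  refine eq_top_of_forall_lie_mem hgen ?_ ?_
  · rintro _ ((⟨i, rfl⟩ | ⟨i, rfl⟩) | ⟨i, rfl⟩)
    · exact Submodule.subset_span (.inl <| .inl ⟨[i], rfl⟩)
    · exact Submodule.subset_span (.inl <| .inr ⟨i, rfl⟩)
    · exact Submodule.subset_span (.inr ⟨[i], rfl⟩)
  · rintro _ ((⟨i, rfl⟩ | ⟨i, rfl⟩) | ⟨i, rfl⟩) z hz
    · exact rel.lie_e_triangular_mem i hz
    · exact rel.lie_h_triangular_mem i hz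
    · rw [← triangularSpan_swap] at hz ⊢
      exact rel.symm.lie_e_triangular_mem i hz

end ChevalleyRelations

end TriangularDecomposition

section RootSpace

theorem sum_map_eq_sum_mul_count {ι : Type*} [Fintype ι] [DecidableEq ι] (d : ι → ℤ)
    (w : List ι) : (w.map d).sum = ∑ i, d i * w.count i := by
  simp only [Finset.sum_list_map_count, nsmul_eq_mul, mul_comm]
  refine Finset.sum_subset (Finset.subset_univ _) fun i _ hi => ?_
  rw [List.count_eq_zero.mpr (by simpa using hi), Nat.cast_zero, mul_zero]

theorem commute_ad_of_lie_eq_zero {R L : Type*} [CommRing R] [LieRing L] [LieAlgebra R L] {x y : L}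
    (hxy : ⁅x, y⁆ = 0) : Commute (LieAlgebra.ad R L x) (LieAlgebra.ad R L y) :=
  LinearMap.ext fun z => by
    change ⁅x, ⁅y, z⁆⁆ = ⁅y, ⁅x, z⁆⁆
    rw [leibniz_lie, hxy, zero_lie, zero_add]

/-- The span of the right-normed brackets of the words in which each letter `i` occurs `c i`
times. -/
def contentSpan (R : Type*) {ι L : Type*} [CommRing R] [LieRing L] [LieAlgebra R L]
    [DecidableEq ι] (e : ι → L) (c : ι → ℕ) : Submodule R L :=
  Submodule.span R (rightNormed e '' {w | ∀ i, w.count i = c i})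

variable {A : Matrix (Fin ℓ) (Fin ℓ) ℤ}

theorem mem_rootSpace_iff {c : Fin ℓ → ℤ} {x : gA A} :
    x ∈ rootSpace A c ↔ ∀ i, ⁅Hbar A i, x⁆ = (A.mulVec c i) • x := by
  simp only [rootSpace, Submodule.mem_iInf, Module.End.mem_eigenspace_iff, LieAlgebra.ad_apply,
    Int.cast_smul_eq_zsmul]
  rfl

theorem iSupIndep_rootSpace (hA : A.det ≠ 0) : iSupIndep (rootSpace A) := by
  let weight (c : Fin ℓ → ℤ) (i : Fin ℓ) : ℂ := (A.mulVec c i : ℤ)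
  have weight_injective : Function.Injective weight := fun c c' hcc' =>
    Matrix.mulVec_injective_of_det_ne_zero hA <|
      funext fun i => Int.cast_injective (congrFun hcc' i)
  have ad_commute (i j : Fin ℓ) :
      Commute (LieAlgebra.ad ℂ (gA A) (Hbar A i)) (LieAlgebra.ad ℂ (gA A) (Hbar A j)) :=
    commute_ad_of_lie_eq_zero (serreRelations_bar.lie_h_h i j)
  refine ((Module.End.independent_iInf_maxGenEigenspace_of_forall_mapsTo
    (fun i => LieAlgebra.ad ℂ (gA A) (Hbar A i)) fun i j φ =>
      Module.End.mapsTo_maxGenEigenspace_of_comm (ad_commute j i) φ).comp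
        weight_injective).mono fun c => ?_
  exact iInf_mono fun i => Module.End.eigenspace_le_maxGenEigenspace

theorem rightNormed_Ebar_mem_rootSpace (w : List (Fin ℓ)) :
    rightNormed (Ebar A) w ∈ rootSpace A fun i => w.count i :=
  mem_rootSpace_iff.mpr fun i => by
    rw [serreRelations_bar.lie_h_rightNormed, sum_map_eq_sum_mul_count]
    rfl

theorem rightNormed_Fbar_mem_rootSpace (w : List (Fin ℓ)) :
    rightNormed (Fbar A) w ∈ rootSpace A fun i => -(w.count i : ℤ) :=
  mem_rootSpace_iff.mpr fun i => by
    rw [lie_rightNormed (serreRelations_bar.lie_h_f i), sum_map_eq_sum_mul_count]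
    simp only [Matrix.mulVec, dotProduct, neg_mul, mul_neg]

theorem Hbar_mem_rootSpace (i : Fin ℓ) : Hbar A i ∈ rootSpace A 0 :=
  mem_rootSpace_iff.mpr fun j => by
    rw [serreRelations_bar.lie_h_h, Matrix.mulVec_zero, Pi.zero_apply, zero_smul]

/-- Root spaces are independent, and every spanning element of the triangular decomposition lies
in a single root space; the only ones in the root space of `c` are the brackets of content `c`. -/
theorem rootSpace_eq_contentSpan (hA : A.det ≠ 0) {c : Fin ℓ → ℕ} (hc : c ≠ 0) :
    rootSpace A (fun i => c i) = contentSpan ℂ (Ebar A) c := by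
  set others := ⨆ c' ≠ (fun i => (c i : ℤ)), rootSpace A c'
  have mem_others {c' : Fin ℓ → ℤ} (hc' : c' ≠ fun i => (c i : ℤ)) {x : gA A}
      (hx : x ∈ rootSpace A c') : x ∈ others :=
    Submodule.mem_iSup_of_mem c' (Submodule.mem_iSup_of_mem hc' hx)
  have content_le : contentSpan ℂ (Ebar A) c ≤ rootSpace A fun i => c i := by
    refine Submodule.span_le.mpr ?_
    rintro _ ⟨w, hw, rfl⟩
    simpa only [hw _, SetLike.mem_coe] using rightNormed_Ebar_mem_rootSpace (A := A) w
  have top_le : ⊤ ≤ contentSpan ℂ (Ebar A) c ⊔ others := by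
    rw [← serreRelations_bar.triangularSpan_eq_top (R := ℂ) lieSpan_bar_eq_top]
    refine Submodule.span_le.mpr ?_
    rintro _ ((⟨w, rfl⟩ | ⟨i, rfl⟩) | ⟨w, rfl⟩)
    · by_cases hw : ∀ i, w.count i = c i
      · exact Submodule.mem_sup_left (Submodule.subset_span ⟨w, hw, rfl⟩)
      · refine Submodule.mem_sup_right (mem_others ?_ (rightNormed_Ebar_mem_rootSpace w))
        exact fun heq => hw fun i => by exact_mod_cast congrFun heq i
    · refine Submodule.mem_sup_right (mem_others ?_ (Hbar_mem_rootSpace i))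
      exact fun heq => hc (funext fun i => by simpa using (congrFun heq i).symm)
    · refine Submodule.mem_sup_right (mem_others ?_ (rightNormed_Fbar_mem_rootSpace w))
      refine fun heq => hc (funext fun i => ?_)
      have := congrFun heq i
      simp only [Pi.zero_apply]
      omega
  refine (eq_of_le_of_inf_le_of_sup_le content_le (z := others) ?_ (le_top.trans top_le)).symm
  exact (iSupIndep_rootSpace hA _).eq_bot.le.trans bot_le

end RootSpace

section CoinducedModule

attribute [local instance] LieRing.ofAssociativeRing

section Restrict

variable {R ι M : Type*} [CommRing R] [AddCommGroup M] [Module R M]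

theorem apply_apply_eq_add_lie_apply (S T : Module.End R M) (x : M) :
    S (T x) = T (S x) + ⁅S, T⁆ x :=
  (add_sub_cancel _ _).symm

variable {N : Submodule R M} {e f h : ι → Module.End R M}

theorem coe_rightNormed_restrict (he : ∀ i, ∀ x ∈ N, e i x ∈ N) (w : List ι) (x : N) :
    (rightNormed (fun i => (e i).restrict (he i)) w x : M) = rightNormed e w x := by
  induction w using word_induction generalizing x with
  | nil => rfl
  | singleton i => rfl
  | cons i w hw ih =>
    rw [rightNormed_cons _ _ hw, rightNormed_cons _ _ hw, Ring.lie_def, Ring.lie_def]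
    exact congrArg₂ (e i · - ·) (ih x) (ih _)

theorem ChevalleyRelations.restrict [DecidableEq ι] {A : Matrix ι ι ℤ}
    (rel : ChevalleyRelations A e f h) (he : ∀ i, ∀ x ∈ N, e i x ∈ N)
    (hf : ∀ i, ∀ x ∈ N, f i x ∈ N) (hh : ∀ i, ∀ x ∈ N, h i x ∈ N) :
    ChevalleyRelations A (fun i => (e i).restrict (he i)) (fun i => (f i).restrict (hf i))
      (fun i => (h i).restrict (hh i)) where
  lie_h_h i j := LinearMap.ext fun x => Subtype.ext (LinearMap.congr_fun (rel.lie_h_h i j) x)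
  lie_e_f i j := LinearMap.ext fun x => Subtype.ext <|
    (LinearMap.congr_fun (rel.lie_e_f i j) x).trans (by split_ifs <;> rfl)
  lie_h_e i j := LinearMap.ext fun x => Subtype.ext (LinearMap.congr_fun (rel.lie_h_e i j) x)
  lie_h_f i j := LinearMap.ext fun x => Subtype.ext (LinearMap.congr_fun (rel.lie_h_f i j) x)

end Restrict

variable {ι R : Type*} [CommRing R]

/-- The element `e i` acting on functions on words, that is, on the dual of the free associative
algebra: the transpose of left multiplication by the letter `i`. -/
def raise (R : Type*) {ι : Type*} [CommRing R] (i : ι) : Module.End R (List ι → R) :=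
  LinearMap.funLeft R R (List.cons i)

theorem raise_apply (i : ι) (φ : List ι → R) (w : List ι) : raise R i φ w = φ (i :: w) :=
  rfl

theorem rightNormed_raise_cons (i : ι) {w : List ι} (hw : w ≠ []) (φ : List ι → R) (b : List ι) :
    rightNormed (raise R) (i :: w) φ b =
      rightNormed (raise R) w φ (i :: b) - rightNormed (raise R) w (raise R i φ) b := by
  rw [rightNormed_cons _ _ hw, Ring.lie_def]
  rfl

theorem rightNormed_raise_apply_eq_zero {w b : List ι} {φ : List ι → R}
    (hφ : ∀ u : List ι, u.Perm w → φ (u ++ b) = 0) : rightNormed (raise R) w φ b = 0 := by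
  induction w using word_induction generalizing φ b with
  | nil => rfl
  | singleton i => exact hφ [i] (List.Perm.refl _)
  | cons i w hw ih =>
    rw [rightNormed_raise_cons i hw, ih, ih, sub_zero]
    · exact fun u hu => hφ (i :: u) (hu.cons i)
    · refine fun u hu => ?_
      rw [← List.singleton_append, ← List.append_assoc]
      exact hφ _ ((List.perm_append_singleton i u).trans (hu.cons i))

theorem rightNormed_raise_intCast (w b : List ι) (φ : List ι → ℤ) :
    rightNormed (raise R) w (fun u => (φ u : R)) b = (rightNormed (raise ℤ) w φ b : ℤ) := by
  induction w using word_induction generalizing φ b with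
  | nil => exact Int.cast_zero.symm
  | singleton i => rfl
  | cons i w hw ih =>
    rw [rightNormed_raise_cons i hw, rightNormed_raise_cons i hw, Int.cast_sub, ← ih, ← ih]
    rfl

/-- The Cartan element `h i` acting on functions on words: `-∑ A i j`, over the letters `j` of the
word, is the eigenvalue at that word. -/
def cartan (R : Type*) {ι : Type*} [CommRing R] (A : Matrix ι ι ℤ) (i : ι) :
    Module.End R (List ι → R) :=
  LinearMap.pi fun w => (-(w.map (A i)).sum) • LinearMap.proj w

/-- The value of `lower R A j φ` at a word, as a functional of `φ`. -/
def lowerAt (R : Type*) {ι : Type*} [CommRing R] [DecidableEq ι] (A : Matrix ι ι ℤ) (j : ι) :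
    List ι → ((List ι → R) →ₗ[R] R)
  | [] => 0
  | i :: w => lowerAt R A j w ∘ₗ raise R i + if i = j then LinearMap.proj w ∘ₗ cartan R A j else 0

/-- The element `f j` acting on functions on words. It is determined by the commutators
`⁅e i, f j⁆ = δᵢⱼ h j`, with `e i = raise R i`, and by vanishing at the empty word. -/
def lower (R : Type*) {ι : Type*} [CommRing R] [DecidableEq ι] (A : Matrix ι ι ℤ) (j : ι) :
    Module.End R (List ι → R) :=
  LinearMap.pi (lowerAt R A j)

theorem eq_zero_of_lie_raise_eq_zero {T : Module.End R (List ι → R)}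
    (hT : ∀ i : ι, ⁅raise R i, T⁆ = 0) (hnil : ∀ φ, T φ [] = 0) : T = 0 := by
  refine LinearMap.ext fun φ => funext fun w => ?_
  induction w generalizing φ with
  | nil => exact hnil φ
  | cons i w ih =>
    rw [← raise_apply i (T φ), apply_apply_eq_add_lie_apply, hT, LinearMap.zero_apply, add_zero]
    exact ih _

variable {A : Matrix ι ι ℤ}

theorem lie_cartan_cartan (i j : ι) :
    ⁅cartan R A i, cartan R A j⁆ = 0 := by
  rw [Ring.lie_def, sub_eq_zero]
  refine LinearMap.ext fun φ => funext fun w => ?_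
  exact smul_comm (-(w.map (A i)).sum) (-(w.map (A j)).sum) (φ w)

theorem lie_cartan_raise (i j : ι) :
    ⁅cartan R A i, raise R j⁆ = A i j • raise R j := by
  refine LinearMap.ext fun φ => funext fun w => ?_
  change -(w.map (A i)).sum • φ (j :: w) - -((j :: w).map (A i)).sum • φ (j :: w) =
    A i j • φ (j :: w)
  rw [← sub_smul, List.map_cons, List.sum_cons]
  congr 1
  ring

theorem rightNormed_raise_apply_map_eq_zero {T : Module.End R (List ι → R)} {w : List ι} {c : ℤ}
    (hT : ⁅T, rightNormed (raise R) w⁆ = c • rightNormed (raise R) w) {φ : List ι → R}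
    (hφ : rightNormed (raise R) w φ = 0) : rightNormed (raise R) w (T φ) = 0 := by
  rw [apply_apply_eq_add_lie_apply, ← lie_skew, hT, hφ, map_zero, zero_add, LinearMap.neg_apply,
    LinearMap.smul_apply, hφ, smul_zero, neg_zero]

variable (R A) in
/-- The functions on words orthogonal to the ideal of the free associative algebra generated by
the Serre elements: an element `a • S • b` of this ideal is here tested by shifting by `a`,
applying `S`, and evaluating at `b`. -/
def serreOrthogonal : Submodule R (List ι → R) :=
  ⨅ (a : List ι) (i : ι) (j : ι) (_ : i ≠ j),
    LinearMap.ker (rightNormed (raise R) (serreWord A i j) ∘ₗ LinearMap.funLeft R R (a ++ ·))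

theorem mem_serreOrthogonal_iff {φ : List ι → R} :
    φ ∈ serreOrthogonal R A ↔ ∀ (a : List ι) (i j : ι), i ≠ j →
      rightNormed (raise R) (serreWord A i j) (fun w => φ (a ++ w)) = 0 := by
  simp only [serreOrthogonal, Submodule.mem_iInf, LinearMap.mem_ker]
  rfl

theorem rightNormed_raise_serreWord (φ : serreOrthogonal R A) {i j : ι} (hij : i ≠ j) :
    rightNormed (raise R) (serreWord A i j) φ = 0 :=
  mem_serreOrthogonal_iff.mp φ.2 [] i j hij

theorem raise_mem_serreOrthogonal (k : ι) {φ : List ι → R} (hφ : φ ∈ serreOrthogonal R A) :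
    raise R k φ ∈ serreOrthogonal R A :=
  mem_serreOrthogonal_iff.mpr fun a => mem_serreOrthogonal_iff.mp hφ (k :: a)

theorem cartan_mem_serreOrthogonal (k : ι) {φ : List ι → R} (hφ : φ ∈ serreOrthogonal R A) :
    cartan R A k φ ∈ serreOrthogonal R A := by
  refine mem_serreOrthogonal_iff.mpr fun a i j hij => ?_
  have ha := mem_serreOrthogonal_iff.mp hφ a i j hij
  have shift_cartan : (fun w => cartan R A k φ (a ++ w)) =
      cartan R A k (fun w => φ (a ++ w)) - (a.map (A k)).sum • fun w => φ (a ++ w) := by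
    funext w
    change -((a ++ w).map (A k)).sum • φ (a ++ w) = -(w.map (A k)).sum • φ (a ++ w) -
      (a.map (A k)).sum • φ (a ++ w)
    rw [← sub_smul, List.map_append, List.sum_append, neg_add']
    congr 1
    ring
  rw [shift_cartan, map_sub, map_zsmul, ha, smul_zero, sub_zero]
  exact rightNormed_raise_apply_map_eq_zero (lie_rightNormed (lie_cartan_raise k) _) ha

variable [DecidableEq ι]

theorem lie_raise_lower (i j : ι) :
    ⁅raise R i, lower R A j⁆ = if i = j then cartan R A j else 0 := by
  rw [Ring.lie_def, sub_eq_iff_eq_add']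
  refine LinearMap.ext fun φ => funext fun w => ?_
  change lowerAt R A j (i :: w) φ = _
  rw [lowerAt]
  split_ifs <;> rfl

theorem lie_cartan_lower (i j : ι) :
    ⁅cartan R A i, lower R A j⁆ = -A i j • lower R A j := by
  rw [neg_smul, ← add_eq_zero_iff_eq_neg]
  refine eq_zero_of_lie_raise_eq_zero (fun k => ?_) fun φ => ?_
  · have lie_raise_cartan : ⁅raise R k, cartan R A i⁆ = -(A i k • raise R k) := by
      rw [← lie_skew, lie_cartan_raise]
    rw [lie_add, lie_smul, leibniz_lie, lie_raise_cartan, neg_lie, smul_lie, lie_raise_lower]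
    split_ifs with hkj
    · rw [lie_cartan_cartan, hkj, add_zero, neg_add_cancel]
    · simp
  · have lower_nil (φ : List ι → R) : lower R A j φ [] = 0 := rfl
    simp [Ring.lie_def, cartan, lower_nil]

theorem chevalleyRelations_raise :
    ChevalleyRelations A (raise R) (lower R A) (cartan R A) where
  lie_h_h := lie_cartan_cartan
  lie_e_f i j := by
    rw [lie_raise_lower]
    split_ifs with hij
    · rw [hij]
    · rfl
  lie_h_e := lie_cartan_raise
  lie_h_f := lie_cartan_lower

theorem rightNormed_lower_apply_nil (w : List ι) (φ : List ι → R) :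
    rightNormed (lower R A) w φ [] = 0 := by
  induction w using word_induction generalizing φ with
  | nil => rfl
  | singleton i => rfl
  | cons i w hw ih =>
    rw [rightNormed_cons _ _ hw]
    exact (congrArg (0 - ·) (ih (lower R A i φ))).trans (sub_zero 0)

theorem rightNormed_lower_serreWord (hA : IsGeneralizedCartan A) {i j : ι} (hij : i ≠ j) :
    rightNormed (lower R A) (serreWord A i j) = 0 :=
  eq_zero_of_lie_raise_eq_zero (fun k => chevalleyRelations_raise.symm.lie_f_serre hA hij k)
    (rightNormed_lower_apply_nil _)

theorem lower_mem_serreOrthogonal (hA : IsGeneralizedCartan A) (k : ι) {φ : List ι → R}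
    (hφ : φ ∈ serreOrthogonal R A) : lower R A k φ ∈ serreOrthogonal R A := by
  refine mem_serreOrthogonal_iff.mpr fun a i j hij => ?_
  induction a generalizing φ with
  | nil =>
    have hφ_nil := mem_serreOrthogonal_iff.mp hφ [] i j hij
    refine rightNormed_raise_apply_map_eq_zero (c := 0) ?_ hφ_nil
    rw [chevalleyRelations_raise.lie_f_serre hA hij k, zero_smul]
  | cons l a ih =>
    have raise_lower : raise R l (lower R A k φ) =
        lower R A k (raise R l φ) + if l = k then cartan R A k φ else 0 := by
      rw [apply_apply_eq_add_lie_apply, lie_raise_lower]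
      split_ifs <;> rfl
    have shift_lower : (fun w => lower R A k φ (l :: a ++ w)) =
        (fun w => lower R A k (raise R l φ) (a ++ w)) +
          fun w => (if l = k then cartan R A k φ else 0) (a ++ w) :=
      funext fun w => congrFun raise_lower (a ++ w)
    rw [shift_lower, map_add, ih (raise_mem_serreOrthogonal l hφ), zero_add]
    split_ifs
    · exact mem_serreOrthogonal_iff.mp (cartan_mem_serreOrthogonal k hφ) a i j hij
    · exact map_zero _

theorem serreRelations_restrict (hA : IsGeneralizedCartan A) :
    SerreRelations (L := Module.End R (serreOrthogonal R A)) A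
      (fun i => (raise R i).restrict fun _ => raise_mem_serreOrthogonal i)
      (fun i => (lower R A i).restrict fun _ => lower_mem_serreOrthogonal hA i)
      (fun i => (cartan R A i).restrict fun _ => cartan_mem_serreOrthogonal i) where
  toChevalleyRelations := chevalleyRelations_raise.restrict _ _ _
  serre_e i j hij := LinearMap.ext fun φ => Subtype.ext <| by
    rw [coe_rightNormed_restrict]
    exact rightNormed_raise_serreWord φ hij
  serre_f i j hij := LinearMap.ext fun φ => Subtype.ext <| by
    rw [coe_rightNormed_restrict, rightNormed_lower_serreWord hA hij]
    rfl

/-- Evaluation at the empty word turns the action of `g(A)` on `φ` into a functional. -/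
theorem exists_linearMap_rightNormed_Ebar {A : Matrix (Fin ℓ) (Fin ℓ) ℤ}
    (hA : IsGeneralizedCartan A) {φ : List (Fin ℓ) → ℂ} (hφ : φ ∈ serreOrthogonal ℂ A) :
    ∃ θ : gA A →ₗ[ℂ] ℂ, ∀ w, θ (rightNormed (Ebar A) w) = rightNormed (raise ℂ) w φ [] := by
  obtain ⟨ρ, hρ⟩ := exists_lieHom_of_serreRelations (serreRelations_restrict (R := ℂ) hA)
  refine ⟨LinearMap.proj [] ∘ₗ (serreOrthogonal ℂ A).subtype ∘ₗ
    LinearMap.applyₗ (⟨φ, hφ⟩ : serreOrthogonal ℂ A) ∘ₗ ρ.toLinearMap, fun w => ?_⟩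
  change (ρ (rightNormed (Ebar A) w) ⟨φ, hφ⟩ : List (Fin ℓ) → ℂ) [] = _
  rw [map_rightNormed ρ ρ.map_lie]
  simp only [hρ]
  rw [coe_rightNormed_restrict]

/-- The condition that no factor of the word `t` is an anagram of a `serreWord`. -/
def SerreFree (A : Matrix ι ι ℤ) (t : List ι) : Prop :=
  ∀ i j, i ≠ j → ∀ s ∈ t.tails, ∀ u ∈ s.inits, ¬ u.Perm (serreWord A i j)

instance [Fintype ι] (t : List ι) : Decidable (SerreFree A t) :=
  inferInstanceAs (Decidable (∀ i j, i ≠ j → ∀ s ∈ t.tails, ∀ u ∈ s.inits, ¬ u.Perm _))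

theorem single_mem_serreOrthogonal {t : List ι} (ht : SerreFree A t) (r : R) :
    Pi.single t r ∈ serreOrthogonal R A := by
  refine mem_serreOrthogonal_iff.mpr fun a i j hij => funext fun b =>
    rightNormed_raise_apply_eq_zero fun u hu => Pi.single_eq_of_ne (M := fun _ => R) ?_ r
  rintro rfl
  exact ht i j hij (u ++ b) (by simp) u (by simp) hu

/-- The coefficient of the reversal of `t` in the right-normed bracket of `w`, in the free
associative ring. -/
def bracketCoeff (w t : List ι) : ℤ :=
  rightNormed (raise ℤ) w (Pi.single t 1) []

theorem linearIndependent_rightNormed_Ebar {A : Matrix (Fin ℓ) (Fin ℓ) ℤ}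
    (hA : IsGeneralizedCartan A) {κ : Type*} [Fintype κ] [DecidableEq κ]
    {W T : κ → List (Fin ℓ)} (hT : ∀ k, SerreFree A (T k))
    (hdet : (Matrix.of fun k l => bracketCoeff (W k) (T l)).det ≠ 0) :
    LinearIndependent ℂ fun k => rightNormed (Ebar A) (W k) := by
  choose θ hθ using fun k =>
    exists_linearMap_rightNormed_Ebar hA (single_mem_serreOrthogonal (hT k) (1 : ℂ))
  have theta_apply (k l : κ) :
      θ l (rightNormed (Ebar A) (W k)) = (bracketCoeff (W k) (T l) : ℂ) := by
    have single_one : (Pi.single (T l) 1 : List (Fin ℓ) → ℂ) =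
        fun u => ((Pi.single (T l) 1 : List (Fin ℓ) → ℤ) u : ℂ) := by
      funext u
      simp [Pi.single_apply]
    rw [hθ, single_one, rightNormed_raise_intCast, bracketCoeff]
  set C : Matrix κ κ ℂ :=
    (Int.castRingHom ℂ).mapMatrix (Matrix.of fun k l => bracketCoeff (W k) (T l))
  have hC : C.det ≠ 0 := by
    rw [← RingHom.map_det]
    exact Int.cast_ne_zero.mpr hdet
  have rows : (LinearMap.pi θ ∘ fun k => rightNormed (Ebar A) (W k)) = C.row :=
    funext fun k => funext fun l => theta_apply k l
  refine LinearIndependent.of_comp (LinearMap.pi θ) ?_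
  exact rows ▸ Matrix.linearIndependent_rows_of_det_ne_zero hC

end CoinducedModule

section NormalWords

variable {ι L : Type*} [LieRing L] {e : ι → L}

theorem rightNormed_singleton (e : ι → L) (i : ι) : rightNormed e [i] = e i := rfl

theorem lie_rightNormed_cons (e : ι → L) (i j : ι) (w : List ι) :
    ⁅e i, rightNormed e (j :: w)⁆ = rightNormed e (i :: j :: w) := rfl

theorem rightNormed_cons_cons_lie (e : ι → L) (i j : ι) (w : List ι) (z : L) :
    ⁅rightNormed e (i :: j :: w), z⁆ =
      ⁅e i, ⁅rightNormed e (j :: w), z⁆⁆ - ⁅rightNormed e (j :: w), ⁅e i, z⁆⁆ :=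
  lie_lie _ _ _

/-- A word is normal with respect to a list of reducible words if none of them is a suffix of it. -/
def IsNormal (reducible : List (List ι)) (w : List ι) : Prop :=
  ∀ r ∈ reducible, ¬r <:+ w

variable [DecidableEq ι]

instance (reducible : List (List ι)) : DecidablePred (IsNormal reducible) :=
  fun _ => List.decidableBAll _ _

variable (K : Type*) [Field K] [LieAlgebra K L]

/-- The span of the right-normed brackets of the normal words of content `c`. -/
def normalSpan (reducible : List (List ι)) (e : ι → L) (c : ι → ℕ) : Submodule K L :=
  Submodule.span K (rightNormed e '' {w | (∀ i, w.count i = c i) ∧ IsNormal reducible w})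

variable {K} {reducible : List (List ι)}

/-- Normality passes to suffixes, so rewriting the reducible words themselves is enough: a bracket
`⁅e i, rightNormed e v⁆` with `v` normal can only be reducible as a whole. -/
theorem rightNormed_mem_normalSpan
    (hred : ∀ r ∈ reducible, rightNormed e r ∈ normalSpan K reducible e fun i => r.count i)
    (hnil : [] ∉ reducible) (w : List ι) :
    rightNormed e w ∈ normalSpan K reducible e fun i => w.count i := by
  have mem_of_isNormal_tail (i : ι) (w : List ι) (hw : ∀ r ∈ reducible, r <:+ i :: w → r = i :: w) :
      rightNormed e (i :: w) ∈ normalSpan K reducible e fun k => (i :: w).count k := by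
    by_cases hiw : i :: w ∈ reducible
    · exact hred _ hiw
    · exact Submodule.subset_span ⟨_, ⟨fun _ => rfl, fun r hr hrw => hiw (hw r hr hrw ▸ hr)⟩, rfl⟩
  induction w using word_induction with
  | nil => exact zero_mem _
  | singleton i =>
    refine mem_of_isNormal_tail i [] fun r hr hri => ?_
    rcases List.suffix_cons_iff.mp hri with rfl | hr'
    · rfl
    · exact absurd (List.suffix_nil.mp hr' ▸ hr) hnil
  | cons i w hw ih =>
    rw [rightNormed_cons _ _ hw]
    refine lie_mem_of_mem_span ?_ ih
    rintro _ ⟨v, ⟨hvw, hv⟩, rfl⟩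
    have hcount : (fun k => (i :: w).count k) = fun k => (i :: v).count k :=
      funext fun k => by rw [List.count_cons, List.count_cons, hvw]
    have hv_ne : v ≠ [] := by
      rintro rfl
      obtain ⟨k, hk⟩ := List.exists_mem_of_ne_nil w hw
      exact (List.count_pos_iff.mpr hk).ne (hvw k)
    rw [hcount, ← rightNormed_cons _ _ hv_ne]
    exact mem_of_isNormal_tail i v fun r hr hriv =>
      (List.suffix_cons_iff.mp hriv).resolve_right (hv r hr)

theorem length_eq_sum_count [Fintype ι] (w : List ι) : w.length = ∑ i, w.count i := by
  simpa using (Multiset.sum_count_eq_card (m := (w : Multiset ι)) fun i _ => Finset.mem_univ i).symm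

theorem finiteDimensional_contentSpan [Finite ι] (e : ι → L) (c : ι → ℕ) :
    FiniteDimensional K (contentSpan K e c) := by
  have := Fintype.ofFinite ι
  refine FiniteDimensional.span_of_finite K (Set.Finite.image _ ?_)
  refine (List.finite_length_eq ι (∑ i, c i)).subset fun w hw => ?_
  exact (length_eq_sum_count w).trans (Finset.sum_congr rfl fun i _ => hw i)

theorem finrank_contentSpan_le [Fintype ι]
    (hred : ∀ r ∈ reducible, rightNormed e r ∈ normalSpan K reducible e fun i => r.count i)
    (hnil : [] ∉ reducible) (c : ι → ℕ) {n : ℕ} (hn : ∑ i, c i = n) :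
    Module.finrank K (contentSpan K e c) ≤
      Finset.card {f : Fin n → ι | (∀ i, (List.ofFn f).count i = c i) ∧
        IsNormal reducible (List.ofFn f)} := by
  classical
  set N : Finset (Fin n → ι) := {f | (∀ i, (List.ofFn f).count i = c i) ∧
    IsNormal reducible (List.ofFn f)} with hN
  set S : Finset L := N.image fun f => rightNormed e (List.ofFn f)
  have hle : contentSpan K e c ≤ Submodule.span K S := by
    refine Submodule.span_le.mpr ?_
    rintro _ ⟨w, hw, rfl⟩
    refine Submodule.span_mono ?_ (rightNormed_mem_normalSpan hred hnil w)
    rintro _ ⟨v, ⟨hvw, hv⟩, rfl⟩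
    have hvc (i : ι) : v.count i = c i := (hvw i).trans (hw i)
    have hlen : v.length = n := by
      rw [length_eq_sum_count, ← hn]
      exact Finset.sum_congr rfl fun i _ => hvc i
    subst hlen
    refine Finset.mem_coe.mpr (Finset.mem_image.mpr ⟨v.get, ?_, by rw [List.ofFn_get]⟩)
    simpa [hN] using ⟨hvc, hv⟩
  calc Module.finrank K (contentSpan K e c)
      ≤ Module.finrank K (Submodule.span K (S : Set L)) := Submodule.finrank_mono hle
    _ ≤ S.card := finrank_span_finset_le_card S
    _ ≤ N.card := Finset.card_image_le

end NormalWords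

section RankTwo

variable {L : Type*} [LieRing L] {e : Fin 2 → L}

theorem rightNormed_10 (e : Fin 2 → L) : rightNormed e [1, 0] = -rightNormed e [0, 1] :=
  (lie_skew (e 1) (e 0)).symm

theorem rightNormed_11101 (hy : rightNormed e [1, 1, 1, 1, 0] = 0) :
    rightNormed e [1, 1, 1, 0, 1] = 0 := by
  rw [← neg_eq_zero, ← hy]
  simp only [← lie_rightNormed_cons e 1 _ (_ :: _), rightNormed_10, lie_neg]

theorem rightNormed_1001 (e : Fin 2 → L) :
    rightNormed e [1, 0, 0, 1] = rightNormed e [0, 1, 0, 1] := by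
  have h := lie_self (rightNormed e [0, 1])
  rw [rightNormed_cons_cons_lie] at h
  exact (sub_eq_zero.mp h).symm

-- This relation and the following ones come from expanding `⁅⁅e 0, e 1⁆, u⁆ = -⁅u, ⁅e 0, e 1⁆⁆`
-- into right-normed brackets on both sides, for a right-normed bracket `u`.
theorem rightNormed_110101 (hy : rightNormed e [1, 1, 1, 0, 1] = 0) :
    rightNormed e [1, 1, 0, 1, 0, 1] =
      (2 : ℤ) • rightNormed e [1, 0, 1, 1, 0, 1] := by
  have h := (lie_skew (rightNormed e [0, 1]) (rightNormed e [1, 1, 0, 1])).symm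
  simp only [rightNormed_cons_cons_lie, rightNormed_singleton, lie_rightNormed_cons, lie_sub,
    lie_zero, lie_self, hy] at h
  linear_combination (norm := module) (1 : ℤ) • h

theorem rightNormed_110001 (e : Fin 2 → L) :
    rightNormed e [1, 1, 0, 0, 0, 1] =
      (-3 : ℤ) • rightNormed e [0, 1, 0, 1, 0, 1] +
      (3 : ℤ) • rightNormed e [1, 0, 0, 1, 0, 1] +
      rightNormed e [0, 0, 1, 1, 0, 1] := by
  have h := (lie_skew (rightNormed e [0, 1]) (rightNormed e [0, 1, 0, 1])).symm
  simp only [rightNormed_cons_cons_lie, rightNormed_singleton, lie_rightNormed_cons, lie_sub,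
    lie_zero, lie_self, rightNormed_1001] at h
  linear_combination (norm := module) (1 : ℤ) • h

theorem rightNormed_11100101 (hy : rightNormed e [1, 1, 1, 0, 1] = 0) :
    rightNormed e [1, 1, 1, 0, 0, 1, 0, 1] =
      (2 : ℤ) • rightNormed e [0, 1, 1, 0, 1, 1, 0, 1] +
      (-8 : ℤ) • rightNormed e [1, 0, 1, 0, 1, 1, 0, 1] +
      rightNormed e [1, 1, 0, 0, 1, 1, 0, 1] +
      (3 : ℤ) • rightNormed e [1, 1, 0, 1, 0, 1, 0, 1] := by
  have h := (lie_skew (rightNormed e [0, 1]) (rightNormed e [1, 0, 1, 1, 0, 1])).symm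
  simp only [rightNormed_cons_cons_lie, rightNormed_singleton, lie_rightNormed_cons, lie_add,
    lie_sub, lie_smul, lie_zero, lie_self, hy, rightNormed_1001, rightNormed_110101 hy,
    rightNormed_110001] at h
  linear_combination (norm := module) (-1 : ℤ) • h

variable (K : Type*) [Field K] [CharZero K] [LieAlgebra K L]

theorem rightNormed_010001 (hx : rightNormed e [0, 0, 0, 0, 1] = 0) :
    rightNormed e [0, 1, 0, 0, 0, 1] =
      (1 / 2 : K) • rightNormed e [0, 0, 0, 1, 0, 1] := by
  have h := (lie_skew (rightNormed e [0, 1]) (rightNormed e [0, 0, 0, 1])).symm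
  simp only [rightNormed_cons_cons_lie, rightNormed_singleton, lie_rightNormed_cons, lie_sub,
    lie_zero, lie_self, hx, rightNormed_1001] at h
  linear_combination (norm := module) (1 / 2 : K) • h

theorem rightNormed_10100101 (hx : rightNormed e [0, 0, 0, 0, 1] = 0)
    (hy : rightNormed e [1, 1, 1, 0, 1] = 0) :
    rightNormed e [1, 0, 1, 0, 0, 1, 0, 1] =
      (2 / 3 : K) • rightNormed e [0, 1, 0, 0, 1, 1, 0, 1] +
      (-2 / 3 : K) • rightNormed e [1, 0, 0, 0, 1, 1, 0, 1] +
      (3 / 2 : K) • rightNormed e [1, 0, 0, 1, 0, 1, 0, 1] +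
      (-1 : K) • rightNormed e [0, 1, 0, 1, 0, 1, 0, 1] +
      (1 / 2 : K) • rightNormed e [0, 1, 1, 0, 0, 1, 0, 1] := by
  have h₁ := (lie_skew (rightNormed e [0, 1]) (rightNormed e [0, 0, 1, 1, 0, 1])).symm
  simp only [rightNormed_cons_cons_lie, rightNormed_singleton, lie_rightNormed_cons, lie_add,
    lie_sub, lie_smul, lie_zero, lie_self, hx, rightNormed_1001, rightNormed_110101 hy,
    rightNormed_110001, rightNormed_010001 K hx] at h₁
  have h₂ := (lie_skew (rightNormed e [0, 1]) (rightNormed e [0, 1, 0, 1, 0, 1])).symm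
  simp only [rightNormed_cons_cons_lie, rightNormed_singleton, lie_rightNormed_cons, lie_add,
    lie_sub, lie_smul, lie_zero, lie_self, hx, rightNormed_1001, rightNormed_110101 hy,
    rightNormed_110001, rightNormed_010001 K hx] at h₂
  linear_combination (norm := module) (-1 / 6 : K) • h₁ + (1 / 4 : K) • h₂

theorem rightNormed_11000101 (hx : rightNormed e [0, 0, 0, 0, 1] = 0)
    (hy : rightNormed e [1, 1, 1, 0, 1] = 0) :
    rightNormed e [1, 1, 0, 0, 0, 1, 0, 1] =
      (-4 : K) • rightNormed e [0, 1, 0, 1, 0, 1, 0, 1] +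
      (4 / 3 : K) • rightNormed e [0, 1, 0, 0, 1, 1, 0, 1] +
      (-4 / 3 : K) • rightNormed e [1, 0, 0, 0, 1, 1, 0, 1] +
      (3 : K) • rightNormed e [1, 0, 0, 1, 0, 1, 0, 1] +
      rightNormed e [0, 1, 1, 0, 0, 1, 0, 1] +
      (2 : K) • rightNormed e [0, 0, 1, 0, 1, 1, 0, 1] := by
  have h := (lie_skew (rightNormed e [0, 1]) (rightNormed e [0, 0, 1, 1, 0, 1])).symm
  simp only [rightNormed_cons_cons_lie, rightNormed_singleton, lie_rightNormed_cons, lie_add,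
    lie_sub, lie_smul, lie_zero, lie_self, hx, rightNormed_1001, rightNormed_110101 hy,
    rightNormed_110001, rightNormed_010001 K hx] at h
  linear_combination (norm := module) (2 / 3 : K) • h +
    (6 : K) • rightNormed_10100101 K hx hy

theorem rightNormed_110010101 (hx : rightNormed e [0, 0, 0, 0, 1] = 0)
    (hy : rightNormed e [1, 1, 1, 0, 1] = 0) :
    rightNormed e [1, 1, 0, 0, 1, 0, 1, 0, 1] =
      (8 : K) • rightNormed e [0, 1, 0, 1, 0, 1, 1, 0, 1] +
      (4 / 3 : K) • rightNormed e [1, 0, 0, 1, 0, 1, 1, 0, 1] +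
      (-2 : K) • rightNormed e [0, 0, 1, 1, 0, 1, 1, 0, 1] +
      (-16 / 9 : K) • rightNormed e [1, 0, 1, 0, 0, 1, 1, 0, 1] +
      (10 / 9 : K) • rightNormed e [1, 1, 0, 0, 0, 1, 1, 0, 1] +
      (-4 / 3 : K) • rightNormed e [0, 1, 1, 0, 0, 1, 1, 0, 1] +
      (-2 / 3 : K) • rightNormed e [1, 0, 1, 0, 1, 0, 1, 0, 1] +
      (5 / 3 : K) • rightNormed e [1, 0, 1, 1, 0, 0, 1, 0, 1] +
      (-2 : K) • rightNormed e [0, 1, 1, 0, 1, 0, 1, 0, 1] := by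
  have h := (lie_skew (rightNormed e [0, 1]) (rightNormed e [0, 1, 0, 1, 1, 0, 1])).symm
  simp only [rightNormed_cons_cons_lie, rightNormed_singleton, lie_rightNormed_cons, lie_add,
    lie_sub, lie_smul, lie_zero, lie_self, hx, hy, rightNormed_1001, rightNormed_110101 hy,
    rightNormed_110001, rightNormed_010001 K hx, rightNormed_11100101 hy,
    rightNormed_10100101 K hx hy, rightNormed_11000101 K hx hy] at h
  linear_combination (norm := module) (-2 / 3 : K) • h

/-- The words that reduce to normal words: those of `⁅x, x⁆ = 0`, of skew symmetry and of the
Serre relations, and the left-hand sides of the relations above. -/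
def reducibleWords : List (List (Fin 2)) :=
  [[0, 0], [1, 1], [1, 0], [0, 0, 0, 0, 1], [1, 1, 1, 0, 1], [1, 0, 0, 1], [1, 1, 0, 1, 0, 1],
    [1, 1, 0, 0, 0, 1], [0, 1, 0, 0, 0, 1], [1, 1, 1, 0, 0, 1, 0, 1], [1, 0, 1, 0, 0, 1, 0, 1],
    [1, 1, 0, 0, 0, 1, 0, 1], [1, 1, 0, 0, 1, 0, 1, 0, 1]]

theorem rightNormed_mem_normalSpan_of_mem_reducibleWords
    (hx : rightNormed e [0, 0, 0, 0, 1] = 0) (hy : rightNormed e [1, 1, 1, 0, 1] = 0) :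
    ∀ r ∈ reducibleWords, rightNormed e r ∈ normalSpan K reducibleWords e fun i => r.count i := by
  intro r hr
  have normal_mem {c : Fin 2 → ℕ} {w : List (Fin 2)} (hwc : ∀ i, w.count i = c i)
      (hw : IsNormal reducibleWords w) : rightNormed e w ∈ normalSpan K reducibleWords e c :=
    Submodule.subset_span ⟨w, ⟨hwc, hw⟩, rfl⟩
  have lie_e_e (i : Fin 2) : rightNormed e [i, i] = 0 := lie_self (e i)
  simp only [reducibleWords, List.mem_cons, List.not_mem_nil, or_false] at hr
  rcases hr with rfl | rfl | rfl | rfl | rfl | rfl | rfl | rfl | rfl | rfl | rfl | rfl | rfl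
  all_goals simp only [lie_e_e, rightNormed_10, hx, hy, rightNormed_1001, rightNormed_110101 hy,
    rightNormed_110001, rightNormed_010001 K hx, rightNormed_11100101 hy,
    rightNormed_10100101 K hx hy, rightNormed_11000101 K hx hy, rightNormed_110010101 K hx hy]
  all_goals repeat' first
    | apply add_mem
    | apply neg_mem
    | apply zsmul_mem
    | apply Submodule.smul_mem
    | exact zero_mem _
    | exact normal_mem (by decide) (by decide)

end RankTwo

section Multiplicity

theorem isGeneralizedCartan_two_neg_three :
    IsGeneralizedCartan (!![2, -3; -3, 2] : Matrix (Fin 2) (Fin 2) ℤ) where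
  diag := by decide
  nonpos := by simp [Fin.forall_fin_two]
  zero_symm := by simp [Fin.forall_fin_two]

theorem card_normal_four_five :
    Finset.card {f : Fin 9 → Fin 2 | (∀ i, (List.ofFn f).count i = (![4, 5] : Fin 2 → ℕ) i) ∧
      IsNormal reducibleWords (List.ofFn f)} = 9 := by
  decide +kernel

theorem finrank_contentSpan_four_five_le {K L : Type*} [Field K] [CharZero K] [LieRing L]
    [LieAlgebra K L] {e : Fin 2 → L} (hx : rightNormed e [0, 0, 0, 0, 1] = 0)
    (hy : rightNormed e [1, 1, 1, 1, 0] = 0) :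
    Module.finrank K (contentSpan K e ![4, 5]) ≤ 9 := by
  have hred := rightNormed_mem_normalSpan_of_mem_reducibleWords K hx (rightNormed_11101 hy)
  have card_sum : ∑ i, (![4, 5] : Fin 2 → ℕ) i = 9 := by decide
  exact (finrank_contentSpan_le hred (by decide) _ card_sum).trans_eq
    (by convert card_normal_four_five)

/-- Words whose brackets form a basis of the root space of `4α₁ + 5α₂`. -/
def basisWords : Fin 9 → List (Fin 2) := ![
  [0, 1, 0, 1, 0, 1, 1, 0, 1], [1, 0, 0, 1, 0, 1, 1, 0, 1], [0, 1, 1, 1, 0, 0, 1, 0, 1],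
  [1, 1, 0, 0, 1, 0, 1, 0, 1], [0, 0, 1, 1, 0, 1, 1, 0, 1], [1, 1, 0, 0, 0, 1, 1, 0, 1],
  [0, 1, 1, 1, 1, 0, 0, 0, 1], [1, 1, 0, 1, 1, 0, 0, 0, 1], [1, 1, 1, 0, 0, 0, 1, 0, 1]]

/-- Test words against which the brackets of `basisWords` are triangular. -/
def testWords : Fin 9 → List (Fin 2) := ![
  [1, 0, 1, 0, 1, 1, 0, 1, 0], [1, 0, 1, 1, 0, 1, 0, 1, 0], [1, 0, 1, 1, 0, 0, 1, 1, 0],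
  [1, 1, 0, 1, 0, 1, 0, 1, 0], [1, 1, 1, 0, 0, 1, 1, 0, 0], [1, 1, 0, 1, 0, 1, 1, 0, 0],
  [1, 0, 1, 0, 0, 1, 1, 1, 0], [1, 1, 0, 1, 0, 0, 1, 1, 0], [1, 1, 1, 0, 0, 1, 0, 1, 0]]

theorem linearIndependent_basisWords :
    LinearIndependent ℂ fun k => rightNormed (Ebar !![2, -3; -3, 2]) (basisWords k) := by
  have serreFree : ∀ k, SerreFree !![2, -3; -3, 2] (testWords k) := by decide +kernel
  have triangular : ∀ k l, l < k → bracketCoeff (basisWords k) (testWords l) = 0 := by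
    decide +kernel
  have diag_ne_zero : ∀ k, bracketCoeff (basisWords k) (testWords k) ≠ 0 := by decide +kernel
  have isUpperTriangular :
      (Matrix.of fun k l => bracketCoeff (basisWords k) (testWords l)).IsUpperTriangular :=
    fun k l => triangular k l
  refine linearIndependent_rightNormed_Ebar isGeneralizedCartan_two_neg_three serreFree ?_
  rw [Matrix.det_of_isUpperTriangular isUpperTriangular]
  exact Finset.prod_ne_zero_iff.mpr fun k _ => diag_ne_zero k

theorem nine_le_finrank_contentSpan_four_five :
    9 ≤ Module.finrank ℂ (contentSpan ℂ (Ebar !![2, -3; -3, 2]) ![4, 5]) := by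
  have content : ∀ k i, (basisWords k).count i = (![4, 5] : Fin 2 → ℕ) i := by decide
  have mem_contentSpan (k : Fin 9) : rightNormed (Ebar !![2, -3; -3, 2]) (basisWords k) ∈
      contentSpan ℂ (Ebar !![2, -3; -3, 2]) ![4, 5] :=
    Submodule.subset_span ⟨_, content k, rfl⟩
  have := finiteDimensional_contentSpan (K := ℂ) (Ebar !![2, -3; -3, 2]) ![4, 5]
  have indep : LinearIndependent ℂ fun k =>
      (⟨_, mem_contentSpan k⟩ : contentSpan ℂ (Ebar !![2, -3; -3, 2]) ![4, 5]) :=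
    .of_comp (Submodule.subtype _) linearIndependent_basisWords
  simpa only [Fintype.card_fin] using indep.fintype_card_le_finrank

end Multiplicity

end KacMoody

/-- **(Berman–Moody example.)**  For the Serre-presented Lie algebra `g(A)` of the
generalized Cartan matrix `A = [[2,−3],[−3,2]]`, the root space of `α = 4α₁ + 5α₂`
(the simultaneous eigenspace with `⁅h₁,x⁆ = −7·x`, `⁅h₂,x⁆ = −2·x`, since
`−7 = 2·4 − 3·5` and `−2 = −3·4 + 2·5`) has dimension `9`: `mult(4α₁+5α₂) = 9`. -/
theorem mult_four_five_eq_nine :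
    KacMoody.mult !![2, -3; -3, 2] ![4, 5] = 9 := by
  open KacMoody in
  let A : Matrix (Fin 2) (Fin 2) ℤ := !![2, -3; -3, 2]
  have rel : SerreRelations A (Ebar A) (Fbar A) (Hbar A) := serreRelations_bar
  have weight : ![4, 5] = fun i => ((![4, 5] : Fin 2 → ℕ) i : ℤ) := by decide
  have rootSpace_eq : rootSpace A ![4, 5] = contentSpan ℂ (Ebar A) ![4, 5] :=
    weight ▸ rootSpace_eq_contentSpan (by decide) (by decide)
  have finrank_le : Module.finrank ℂ (contentSpan ℂ (Ebar A) ![4, 5]) ≤ 9 :=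
    finrank_contentSpan_four_five_le (rel.serre_e 0 1 (by decide)) (rel.serre_e 1 0 (by decide))
  have le_finrank := nine_le_finrank_contentSpan_four_five
  rw [mult, rootSpace_eq]
  exact le_antisymm finrank_le le_finrank
end
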